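/- Let ν be the unique probability measure on LO_0 invariant for the process seen from the front (i.e. Q_t ν = ν for all t ≥ 0, where Q_t π is the pushforward under θ of ∫ P_t(ω,·) dπ(ω)), and set v = p·ν({η : η_1 = 0}) − q. Then for every ω ∈ LO_0: (1/t)·∫ X(η) dP_t(ω, dη) → v as t → ∞ (convergence of the mean front position, the integral being over η ∈ LO). -/

import Mathlib

open MeasureTheory ProbabilityTheory Filter Topology

noncomputable section

/-- The configuration space of the East model on `ℤ`: `0` ↔ `false` (empty), `1` ↔ `true`. -/
abbrev Config : Type := ℤ → Bool

/-- The configuration `ω` flipped at site `x`. -/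
def flipAt (ω : Config) (x : ℤ) : Config := fun y => if y = x then !ω x else ω y

/-- `f` depends only on the coordinates in `S`. -/
def DependsOnF (f : Config → ℝ) (S : Set ℤ) : Prop :=
  ∀ ω ω' : Config, (∀ x ∈ S, ω x = ω' x) → f ω = f ω'

/-- The set `A` depends only on the coordinates in `S`. -/
def DependsOnSet (A : Set Config) (S : Set ℤ) : Prop :=
  ∀ ω ω' : Config, (∀ x ∈ S, ω x = ω' x) → (ω ∈ A ↔ ω' ∈ A)

/-- A cylinder (local) function: depends on finitely many coordinates. -/
def IsCylinder (f : Config → ℝ) : Prop := ∃ S : Finset ℤ, DependsOnF f ↑S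

/-- The East generator at density `p` of ones. -/
def eastGen (p : ℝ) (f : Config → ℝ) (ω : Config) : ℝ :=
  ∑' x : ℤ, (if ω (x + 1) = false then (1 : ℝ) else 0) *
    (if ω x = false then p else 1 - p) * (f (flipAt ω x) - f ω)

/-- Spatial translation: `(shift y ω) x = ω (x + y)`. -/
def shift (y : ℤ) (ω : Config) : Config := fun x => ω (x + y)

/-- Left-occupied configurations: identically `1` on a left half-line, with an empty site. -/
def LO : Set Config := {ω | (∃ y : ℤ, ∀ x < y, ω x = true) ∧ ∃ x, ω x = false}

/-- The front: position of the left-most zero. -/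
def front (ω : Config) : ℤ := sInf {x : ℤ | ω x = false}

/-- Left-occupied configurations with front at the origin. -/
def LO₀ : Set Config := {ω ∈ LO | front ω = 0}

/-- The configuration seen at distance `L` behind the front. -/
def θL (L : ℤ) (ω : Config) : Config := fun x =>
  if x < 0 then true else if x = 0 then false else ω (front ω + L + x)

/-- `f` averaged over the coordinate at site `1` w.r.t. Bernoulli(p). -/
def avg1 (p : ℝ) (f : Config → ℝ) (ω : Config) : ℝ :=
  p * f (Function.update ω 1 true) + (1 - p) * f (Function.update ω 1 false)

/-- The East process on `ℤ` at density `p`, together with its equilibrium measure. -/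
structure EastProcess where
  /-- equilibrium density of ones -/
  p : ℝ
  hp0 : 0 < p
  hp1 : p < 1
  /-- the Markov semigroup -/
  P : ℝ → Kernel Config Config
  markov : ∀ t : ℝ, IsMarkovKernel (P t)
  P0 : P 0 = Kernel.id
  semigroup : ∀ s t : ℝ, 0 ≤ s → 0 ≤ t → P (t + s) = (P s).comp (P t)
  feller : ∀ t : ℝ, 0 ≤ t → ∀ f : Config → ℝ, Continuous f →
    Continuous fun ω : Config => ∫ η, f η ∂(P t ω)
  timeCont : ∀ f : Config → ℝ, Continuous f → ∀ ω : Config,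
    Continuous fun t : ℝ => ∫ η, f η ∂(P t ω)
  shiftComm : ∀ t : ℝ, 0 ≤ t → ∀ y : ℤ, ∀ ω : Config,
    P t (shift y ω) = Measure.map (shift y) (P t ω)
  generator : ∀ f : Config → ℝ, IsCylinder f → ∀ ω : Config,
    HasDerivWithinAt (fun u : ℝ => ∫ η, f η ∂(P u ω)) (eastGen p f ω) (Set.Ici 0) 0
  /-- the product Bernoulli(p) measure -/
  μ : Measure Config
  μprob : IsProbabilityMeasure μ
  μprod : ∀ (S : Finset ℤ) (σ : ℤ → Bool),
    μ {ω : Config | ∀ x ∈ S, ω x = σ x} = ∏ x ∈ S, ENNReal.ofReal (if σ x then p else 1 - p)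
  /-- LO is stable for the dynamics -/
  loStable : ∀ t : ℝ, 0 ≤ t → ∀ ω ∈ LO, P t ω LO = 1

/-- The set of Rayleigh quotients defining the spectral gap. -/
def gapSet (E : EastProcess) : Set ℝ :=
  {r | ∃ f : Config → ℝ, IsCylinder f ∧ 0 < variance f E.μ ∧
    r = (-∫ ω, f ω * eastGen E.p f ω ∂E.μ) / variance f E.μ}

/-- The spectral gap of the East process. -/
def gap (E : EastProcess) : ℝ := sInf (gapSet E)

/-- The product measure `μ̃`: all ones on the negative half-line, a zero at the origin,
Bernoulli(p) on the positive half-line. -/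
def IsMuTilde (p : ℝ) (μt : Measure Config) : Prop :=
  IsProbabilityMeasure μt ∧
  ∀ (S : Finset ℤ) (σ : ℤ → Bool),
    μt {ω : Config | ∀ x ∈ S, ω x = σ x} =
      ∏ x ∈ S, ENNReal.ofReal
        (if x < 0 then (if σ x then 1 else 0)
         else if x = 0 then (if σ x then 0 else 1)
         else (if σ x then p else 1 - p))

/-- The law at time `t` of the process seen from the front started from `π`. -/
def Qt (E : EastProcess) (t : ℝ) (π : Measure Config) : Measure Config :=
  Measure.map (θL 0) (π.bind fun ω => E.P t ω)

/-!
The front moves right at rate `p` when the site ahead of it is empty, and left at rate `q`, so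
Dynkin's formula gives `E_ω[X(t)] = X(ω) + ∫₀ᵗ E_ω[φ(θω(s))] ds` with `φ(η) = p (1 - η₁) - q`.
Since `X` is not local, the formula is applied to the front seen through a window `[-N, N]`, whose
image under the generator is bounded by `1` uniformly in `N`; this also bounds the first moment
of `X(t)`.

By translation invariance the process seen from the front is a Markov process on the compact space
`LO₀`. It is Feller: the map `θ` is discontinuous, but it agrees with a continuous one as long as
the front is in `[-N, N]`, and the front leaves this window with small probability, uniformly over
`LO₀`. Hence all limit points of the time averages of its law are invariant. If the invariant
measures agree on `η₁`, then `(1/t) ∫₀ᵗ E_ω[φ(θω(s))] ds` converges to their common mean of `φ`.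
-/

open scoped NNReal

lemma exists_abs_le_of_continuous {X : Type*} [TopologicalSpace X] [CompactSpace X] {f : X → ℝ}
    (hf : Continuous f) : ∃ C, ∀ x, |f x| ≤ C := by
  obtain ⟨C, hC⟩ := isCompact_univ.exists_bound_of_continuousOn hf.continuousOn
  exact ⟨C, fun x => hC x (Set.mem_univ x)⟩

section FellerSemigroup

variable {X : Type*} [MeasurableSpace X] {Q : ℝ≥0 → Kernel X X}

/-- The action `Q_t f` of a family of kernels on functions. -/
def evolve (Q : ℝ≥0 → Kernel X X) (t : ℝ≥0) (f : X → ℝ) (x : X) : ℝ := ∫ y, f y ∂(Q t x)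

lemma abs_evolve_le [∀ t, IsMarkovKernel (Q t)] {f : X → ℝ} {C : ℝ} (hf : ∀ x, |f x| ≤ C)
    (t : ℝ≥0) (x : X) : |evolve Q t f x| ≤ C := by
  simpa [evolve] using norm_integral_le_of_norm_le_const (μ := Q t x) (f := f) (.of_forall hf)

variable [TopologicalSpace X]

lemma integrable_of_continuous [CompactSpace X] [OpensMeasurableSpace X] (m : Measure X)
    [IsFiniteMeasure m] {f : X → ℝ} (hf : Continuous f) : Integrable f m :=
  hf.integrable_of_hasCompactSupport (.of_compactSpace f)

/-- A (not necessarily strongly continuous) Feller semigroup of kernels: `Q_t` preserves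
continuity and `t ↦ Q_t f(x)` is continuous for every continuous `f` and every `x`. -/
structure IsFellerSemigroup (Q : ℝ≥0 → Kernel X X) : Prop where
  zero : Q 0 = Kernel.id
  add (s t : ℝ≥0) : Q (t + s) = Q s ∘ₖ Q t
  continuous_evolve (t : ℝ≥0) {f : X → ℝ} : Continuous f → Continuous (evolve Q t f)
  continuous_evolve_time {f : X → ℝ} (hf : Continuous f) (x : X) :
    Continuous fun t => evolve Q t f x

section

variable [CompactSpace X] [OpensMeasurableSpace X] [∀ t, IsMarkovKernel (Q t)] {f g : X → ℝ}

lemma evolve_sub (hf : Continuous f) (hg : Continuous g) (t : ℝ≥0) (x : X) :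
    evolve Q t (f - g) x = evolve Q t f x - evolve Q t g x :=
  integral_sub (integrable_of_continuous _ hf) (integrable_of_continuous _ hg)

lemma evolve_le_of_le (hf : Continuous f) {c : ℝ} (hfc : ∀ y, f y ≤ c) (t : ℝ≥0) (x : X) :
    evolve Q t f x ≤ c := by
  simpa [evolve] using
    integral_mono (integrable_of_continuous (Q t x) hf) (integrable_const c) hfc

end

namespace IsFellerSemigroup

lemma evolve_zero [OpensMeasurableSpace X] (hQ : IsFellerSemigroup Q) {f : X → ℝ}
    (hf : Continuous f) (x : X) : evolve Q 0 f x = f x := by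
  simp only [evolve, hQ.zero, Kernel.id_apply]
  exact integral_dirac' _ _ hf.stronglyMeasurable

lemma continuous_evolve_toNNReal (hQ : IsFellerSemigroup Q) {f : X → ℝ} (hf : Continuous f)
    (x : X) : Continuous fun s : ℝ => evolve Q s.toNNReal f x :=
  (hQ.continuous_evolve_time hf x).comp continuous_real_toNNReal

lemma stronglyMeasurable_uncurry_evolve [BorelSpace X] (hQ : IsFellerSemigroup Q)
    {f : X → ℝ} (hf : Continuous f) :
    StronglyMeasurable fun z : X × ℝ => evolve Q z.2.toNNReal f z.1 :=
  (stronglyMeasurable_uncurry_of_continuous_of_stronglyMeasurable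
    (u := fun (s : ℝ) x => evolve Q s.toNNReal f x) (hQ.continuous_evolve_toNNReal hf)
    fun s => (hQ.continuous_evolve s.toNNReal hf).stronglyMeasurable).comp_measurable
      measurable_swap

lemma hasDerivAt_exp_mul_sub_integral (hQ : IsFellerSemigroup Q) {h : X → ℝ} (hh : Continuous h)
    (c : ℝ) (x : X) (t : ℝ) :
    HasDerivAt
      (fun u => Real.exp u * (c - ∫ r in (0 : ℝ)..u, Real.exp (-r) * evolve Q r.toNNReal h x))
      (Real.exp t * (c - ∫ r in (0 : ℝ)..t, Real.exp (-r) * evolve Q r.toNNReal h x) -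
        evolve Q t.toNNReal h x) t := by
  have hcont : Continuous fun r => Real.exp (-r) * evolve Q r.toNNReal h x :=
    (Real.continuous_exp.comp continuous_neg).mul (hQ.continuous_evolve_toNNReal hh x)
  refine ((Real.hasDerivAt_exp t).mul
    ((hcont.integral_hasStrictDerivAt 0 t).hasDerivAt.const_sub c)).congr_deriv ?_
  have hexp : Real.exp t * Real.exp (-t) = 1 := by
    rw [← Real.exp_add, add_neg_cancel, Real.exp_zero]
  rw [mul_neg, ← mul_assoc, hexp, one_mul, ← sub_eq_add_neg]

lemma evolve_evolve [CompactSpace X] [OpensMeasurableSpace X] [∀ t, IsMarkovKernel (Q t)]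
    (hQ : IsFellerSemigroup Q) {f : X → ℝ} (hf : Continuous f) (s t : ℝ≥0) (x : X) :
    evolve Q t (evolve Q s f) x = evolve Q (t + s) f x := by
  simp only [evolve, hQ.add s t]
  exact (Kernel.integral_comp (integrable_of_continuous _ hf)).symm

end IsFellerSemigroup

/-- The resolvent `∫₀^∞ e^{-s} Q_s h ds` at parameter `1`. -/
def resolventOne (Q : ℝ≥0 → Kernel X X) (h : X → ℝ) (x : X) : ℝ :=
  ∫ s in Set.Ioi (0 : ℝ), Real.exp (-s) * evolve Q s.toNNReal h x

namespace IsFellerSemigroup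

variable [CompactSpace X] [∀ t, IsMarkovKernel (Q t)] {f g h : X → ℝ}

lemma integrableOn_exp_neg_mul_evolve (hQ : IsFellerSemigroup Q) (hh : Continuous h) (a : ℝ)
    (x : X) : IntegrableOn (fun s => Real.exp (-s) * evolve Q s.toNNReal h x) (Set.Ioi a) := by
  obtain ⟨C, hC⟩ := exists_abs_le_of_continuous hh
  exact (integrableOn_exp_neg_Ioi a).integrable.mul_bdd
    (hQ.continuous_evolve_toNNReal hh x).aestronglyMeasurable
    (.of_forall fun s => abs_evolve_le hC _ x)

lemma continuous_resolventOne [FirstCountableTopology X] (hQ : IsFellerSemigroup Q)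
    (hh : Continuous h) : Continuous (resolventOne Q h) := by
  obtain ⟨C, hC⟩ := exists_abs_le_of_continuous hh
  refine continuous_of_dominated (bound := fun s => Real.exp (-s) * C)
    (fun x => (hQ.integrableOn_exp_neg_mul_evolve hh 0 x).aestronglyMeasurable)
    (fun x => .of_forall fun s => ?_) ((integrableOn_exp_neg_Ioi 0).mul_const C)
    (.of_forall fun s => continuous_const.mul (hQ.continuous_evolve _ hh))
  rw [norm_mul, Real.norm_of_nonneg (Real.exp_pos _).le]
  exact mul_le_mul_of_nonneg_left (abs_evolve_le hC _ x) (Real.exp_pos _).le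

variable [BorelSpace X]

lemma evolve_resolventOne_eq_setIntegral (hQ : IsFellerSemigroup Q) (hh : Continuous h) (t : ℝ≥0)
    (x : X) : evolve Q t (resolventOne Q h) x =
      ∫ s in Set.Ioi (0 : ℝ), Real.exp (-s) * evolve Q (t + s.toNNReal) h x := by
  obtain ⟨C, hC⟩ := exists_abs_le_of_continuous hh
  have hexp : Integrable (fun z : X × ℝ => (1 : ℝ) * Real.exp (-z.2))
      ((Q t x).prod (volume.restrict (Set.Ioi 0))) :=
    (integrable_const 1).mul_prod (integrableOn_exp_neg_Ioi 0)
  have hint : Integrable (fun z : X × ℝ => Real.exp (-z.2) * evolve Q z.2.toNNReal h z.1)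
      ((Q t x).prod (volume.restrict (Set.Ioi 0))) := by
    simpa only [one_mul] using hexp.mul_bdd
      (hQ.stronglyMeasurable_uncurry_evolve hh).aestronglyMeasurable
      (.of_forall fun z => abs_evolve_le hC _ z.1)
  calc evolve Q t (resolventOne Q h) x
      = ∫ s in Set.Ioi (0 : ℝ), ∫ y, Real.exp (-s) * evolve Q s.toNNReal h y ∂(Q t x) :=
        integral_integral_swap (by exact hint)
    _ = _ := by
        congr with s
        rw [integral_const_mul, ← hQ.evolve_evolve hh, evolve]

lemma evolve_resolventOne (hQ : IsFellerSemigroup Q) (hh : Continuous h) (t : ℝ≥0) (x : X) :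
    evolve Q t (resolventOne Q h) x = Real.exp t *
      (resolventOne Q h x - ∫ r in (0 : ℝ)..t, Real.exp (-r) * evolve Q r.toNNReal h x) := by
  have hshift : ∫ s in Set.Ioi (0 : ℝ), Real.exp (-s) * evolve Q (t + s.toNNReal) h x =
      Real.exp t * ∫ r in Set.Ioi (t : ℝ), Real.exp (-r) * evolve Q r.toNNReal h x := by
    rw [← integral_const_mul, ← (measurePreserving_add_left volume (t : ℝ)).setIntegral_preimage_emb
      (measurableEmbedding_addLeft _) _ (Set.Ioi (t : ℝ)), Set.preimage_const_add_Ioi, sub_self]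
    refine setIntegral_congr_fun measurableSet_Ioi fun s hs => ?_
    rw [← mul_assoc, ← Real.exp_add, Real.toNNReal_add t.coe_nonneg (le_of_lt hs),
      Real.toNNReal_coe]
    ring_nf
  rw [hQ.evolve_resolventOne_eq_setIntegral hh, hshift, ← intervalIntegral.integral_Ioi_sub_Ioi
    (hQ.integrableOn_exp_neg_mul_evolve hh 0 x) t.coe_nonneg, resolventOne, sub_sub_cancel]

/-- `w` attains its maximum at some `z`, and `u ↦ Q_u w(z)` cannot increase there. -/
lemma nonpos_of_generator_eq_self (hQ : IsFellerSemigroup Q) {w : X → ℝ} (hw : Continuous w)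
    (hgen : ∀ x, HasDerivWithinAt (fun u : ℝ => evolve Q u.toNNReal w x) (w x) (Set.Ici 0) 0)
    (x : X) : w x ≤ 0 := by
  have : Nonempty X := ⟨x⟩
  obtain ⟨z, hz⟩ := hw.exists_forall_ge' (f := w) x (by simp)
  refine (hz x).trans (le_of_tendsto
    ((hasDerivWithinAt_iff_tendsto_slope' (Set.self_notMem_Ioi)).1 (hgen z).Ioi_of_Ici) ?_)
  filter_upwards [self_mem_nhdsWithin] with t ht
  rw [slope_def_field, Real.toNNReal_zero, hQ.evolve_zero hw, sub_zero]
  exact div_nonpos_of_nonpos_of_nonneg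
    (sub_nonpos.2 (evolve_le_of_le hw hz _ z)) (le_of_lt ht)

lemma eq_zero_of_generator_eq_self (hQ : IsFellerSemigroup Q) {w : X → ℝ} (hw : Continuous w)
    (hgen : ∀ x, HasDerivWithinAt (fun u : ℝ => evolve Q u.toNNReal w x) (w x) (Set.Ici 0) 0)
    (x : X) : w x = 0 := by
  refine le_antisymm (hQ.nonpos_of_generator_eq_self hw hgen x) (neg_nonpos.1 ?_)
  refine hQ.nonpos_of_generator_eq_self hw.neg (fun y => ?_) x
  simpa only [evolve, Pi.neg_apply, integral_neg] using (hgen y).fun_neg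

lemma generator_resolventOne (hQ : IsFellerSemigroup Q) (hh : Continuous h) (x : X) :
    HasDerivWithinAt (fun u : ℝ => evolve Q u.toNNReal (resolventOne Q h) x)
      (resolventOne Q h x - h x) (Set.Ici 0) 0 := by
  have hderiv := (hQ.hasDerivAt_exp_mul_sub_integral hh (resolventOne Q h x) x 0).hasDerivWithinAt
    (s := Set.Ici 0)
  simp only [Real.exp_zero, intervalIntegral.integral_same, sub_zero, one_mul, Real.toNNReal_zero,
    hQ.evolve_zero hh] at hderiv
  refine hderiv.congr_of_mem (fun u hu => ?_) Set.self_mem_Ici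
  rw [hQ.evolve_resolventOne hh, Real.coe_toNNReal u hu]

lemma eq_resolventOne_of_generator [FirstCountableTopology X] (hQ : IsFellerSemigroup Q)
    (hf : Continuous f) (hg : Continuous g)
    (hgen : ∀ x, HasDerivWithinAt (fun u : ℝ => evolve Q u.toNNReal f x) (g x) (Set.Ici 0) 0)
    (x : X) : f x = resolventOne Q (f - g) x := by
  have hcont := hQ.continuous_resolventOne (hf.sub hg)
  refine sub_eq_zero.1 (hQ.eq_zero_of_generator_eq_self (hf.sub hcont) (fun y => ?_) x)
  refine ((hgen y).fun_sub (hQ.generator_resolventOne (hf.sub hg) y)).congr_deriv ?_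
    |>.congr (fun u _ => evolve_sub hf hcont _ y) (evolve_sub hf hcont _ y)
  simp only [Pi.sub_apply]
  ring

/-- **Dynkin's formula**, from a merely pointwise derivative at time zero: by the maximum principle
`f` is the resolvent of `f - g`, and `Q_t` of a resolvent is explicit. -/
theorem evolve_eq_add_integral [FirstCountableTopology X] (hQ : IsFellerSemigroup Q)
    (hf : Continuous f) (hg : Continuous g)
    (hgen : ∀ x, HasDerivWithinAt (fun u : ℝ => evolve Q u.toNNReal f x) (g x) (Set.Ici 0) 0)
    (t : ℝ≥0) (x : X) : evolve Q t f x = f x + ∫ s in (0 : ℝ)..t, evolve Q s.toNNReal g x := by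
  set h : X → ℝ := f - g
  have hh : Continuous h := hf.sub hg
  have hres : f = resolventOne Q h := funext (hQ.eq_resolventOne_of_generator hf hg hgen)
  have hexplicit (s : ℝ≥0) : evolve Q s f x = Real.exp s *
      (f x - ∫ r in (0 : ℝ)..s, Real.exp (-r) * evolve Q r.toNNReal h x) := by
    have := hQ.evolve_resolventOne hh s x
    rwa [← hres] at this
  have hderiv (s : ℝ) (hs : s ∈ Set.uIcc 0 (t : ℝ)) : HasDerivAt
      (fun u => Real.exp u * (f x - ∫ r in (0 : ℝ)..u, Real.exp (-r) * evolve Q r.toNNReal h x))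
      (evolve Q s.toNNReal g x) s := by
    rw [Set.uIcc_of_le t.coe_nonneg] at hs
    refine (hQ.hasDerivAt_exp_mul_sub_integral hh (f x) x s).congr_deriv ?_
    have := hexplicit s.toNNReal
    rw [Real.coe_toNNReal s hs.1] at this
    rw [← this, evolve_sub hf hg, sub_sub_cancel]
  rw [intervalIntegral.integral_eq_sub_of_hasDerivAt hderiv
    ((hQ.continuous_evolve_toNNReal hg x).intervalIntegrable 0 t), ← hexplicit]
  simp

end IsFellerSemigroup

end FellerSemigroup

section UniqueErgodicity

lemma measurable_measure_of_forall_integral {S Y : Type*} [MeasurableSpace S]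
    [TopologicalSpace Y] [HasOuterApproxClosed Y] [MeasurableSpace Y] [BorelSpace Y]
    {κ : S → Measure Y} [∀ s, IsProbabilityMeasure (κ s)]
    (hκ : ∀ f : Y → ℝ, Continuous f → Measurable fun s => ∫ y, f y ∂(κ s)) : Measurable κ := by
  refine .measure_of_isPiSystem_of_isProbabilityMeasure
    (BorelSpace.measurable_eq.trans borel_eq_generateFrom_isClosed) isPiSystem_isClosed
    fun F (hF : IsClosed F) => ?_
  refine measurable_of_tendsto_metrizable (fun n => ?_)
    (tendsto_pi_nhds.2 fun s => HasOuterApproxClosed.tendsto_lintegral_apprSeq hF (κ s))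
  have hlintegral (s : S) : ∫⁻ y, hF.apprSeq n y ∂(κ s) =
      ENNReal.ofReal (∫ y, (hF.apprSeq n y : ℝ) ∂(κ s)) := by
    rw [← BoundedContinuousFunction.toReal_lintegral_coe_eq_integral, ENNReal.ofReal_toReal
      (BoundedContinuousFunction.lintegral_lt_top_of_nnreal _ _).ne]
  simp_rw [hlintegral]
  exact (hκ _ (NNReal.continuous_coe.comp (hF.apprSeq n).continuous)).ennreal_ofReal

lemma integral_comp_measure {A B : Type*} [MeasurableSpace A] [MeasurableSpace B]
    {m : Measure A} {κ : Kernel A B} {f : B → ℝ} (hf : Integrable f (κ ∘ₘ m)) :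
    ∫ b, f b ∂(κ ∘ₘ m) = ∫ a, ∫ b, f b ∂(κ a) ∂m := by
  rw [Measure.comp_eq_comp_const_apply] at hf ⊢
  rw [Kernel.integral_comp hf, Kernel.const_apply]

variable {X : Type*} [TopologicalSpace X] [MeasurableSpace X] [BorelSpace X]
  {Q : ℝ≥0 → Kernel X X} [∀ t, IsMarkovKernel (Q t)]

namespace IsFellerSemigroup

/-- The law `Q_s(x, ·)` as a kernel in the time variable `s`. -/
def timeKernel [HasOuterApproxClosed X] (hQ : IsFellerSemigroup Q) (x : X) : Kernel ℝ X where
  toFun s := Q s.toNNReal x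
  measurable' := measurable_measure_of_forall_integral fun _ hf =>
    (hQ.continuous_evolve_toNNReal hf x).measurable

/-- The mean occupation measure `(1/T) ∫₀ᵀ Q_s(x, ·) ds`. -/
def occupation [HasOuterApproxClosed X] (hQ : IsFellerSemigroup Q) (x : X) (T : ℝ) : Measure X :=
  hQ.timeKernel x ∘ₘ volume[|Set.Ioc 0 T]

variable [HasOuterApproxClosed X] (hQ : IsFellerSemigroup Q) (x : X) {T : ℝ}

instance : IsMarkovKernel (hQ.timeKernel x) :=
  ⟨fun s => inferInstanceAs (IsProbabilityMeasure (Q s.toNNReal x))⟩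

lemma isProbabilityMeasure_occupation (hT : 0 < T) :
    IsProbabilityMeasure (hQ.occupation x T) := by
  have : IsProbabilityMeasure (volume[|Set.Ioc 0 T]) :=
    cond_isProbabilityMeasure_of_finite (by simpa using hT) (by simp)
  unfold occupation
  infer_instance

variable [CompactSpace X] {f g : X → ℝ}

lemma integral_occupation (hf : Continuous f) (hT : 0 < T) :
    ∫ y, f y ∂(hQ.occupation x T) = 1 / T * ∫ s in (0 : ℝ)..T, evolve Q s.toNNReal f x := by
  have := hQ.isProbabilityMeasure_occupation x hT
  rw [occupation, integral_comp_measure (integrable_of_continuous _ hf),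
    intervalIntegral.integral_of_le hT.le, ProbabilityTheory.cond, integral_smul_measure]
  simp [hT.le, evolve, timeKernel]

lemma tendsto_integral_occupation_evolve_sub (hf : Continuous f) (t : ℝ≥0) :
    Tendsto (fun T => ∫ y, evolve Q t f y ∂(hQ.occupation x T) - ∫ y, f y ∂(hQ.occupation x T))
      atTop (𝓝 0) := by
  obtain ⟨C, hC⟩ := exists_abs_le_of_continuous hf
  have hint (a b : ℝ) : IntervalIntegrable (fun s : ℝ => evolve Q s.toNNReal f x) volume a b :=
    (hQ.continuous_evolve_toNNReal hf x).intervalIntegrable a b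
  have hbound (a : ℝ) : ‖∫ s in a..(a + t), evolve Q s.toNNReal f x‖ ≤ C * t := by
    simpa using intervalIntegral.norm_integral_le_of_norm_le_const (a := a) (b := a + t)
      (f := fun s => evolve Q s.toNNReal f x) fun s _ => abs_evolve_le hC _ x
  refine squeeze_zero_norm' (a := fun T => 2 * (C * t) / T) ?_
    (tendsto_const_nhds.div_atTop tendsto_id)
  filter_upwards [eventually_gt_atTop 0] with T hT
  have hshift : ∫ s in (0 : ℝ)..T, evolve Q s.toNNReal (evolve Q t f) x =
      ∫ s in (0 + t : ℝ)..(T + t), evolve Q s.toNNReal f x := by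
    rw [← intervalIntegral.integral_comp_add_right]
    refine intervalIntegral.integral_congr fun s hs => ?_
    rw [Set.uIcc_of_le hT.le] at hs
    simp only [hQ.evolve_evolve hf, Real.toNNReal_add hs.1 t.coe_nonneg, Real.toNNReal_coe]
  rw [hQ.integral_occupation x (hQ.continuous_evolve t hf) hT, hQ.integral_occupation x hf hT,
    ← mul_sub, hshift, intervalIntegral.integral_interval_sub_interval_comm' (hint _ _) (hint _ _)
    (hint _ _), norm_mul, Real.norm_of_nonneg (by positivity), one_div, inv_mul_eq_div, two_mul]
  gcongr
  exact (norm_sub_le _ _).trans (add_le_add (hbound T) (hbound 0))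

lemma exists_limit_occupation [T2Space X] {U : Ultrafilter ℝ} (hU : ↑U ≤ (atTop : Filter ℝ)) :
    ∃ m : Measure X, IsProbabilityMeasure m ∧ ∀ f : X → ℝ, Continuous f →
      Tendsto (fun T => ∫ y, f y ∂(hQ.occupation x T)) U (𝓝 (∫ y, f y ∂m)) := by
  have hpos (T : ℝ) : 0 < max T 1 := lt_max_of_lt_right one_pos
  let occ (T : ℝ) : ProbabilityMeasure X :=
    ⟨hQ.occupation x (max T 1), hQ.isProbabilityMeasure_occupation x (hpos T)⟩
  refine ⟨(U.map occ).lim, inferInstance, fun f hf => ?_⟩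
  have hlim := ProbabilityMeasure.tendsto_iff_forall_integral_tendsto.1
    (show Tendsto occ U _ from (U.map occ).le_nhds_lim) (.mkOfCompact ⟨f, hf⟩)
  refine hlim.congr' ?_
  filter_upwards [hU (eventually_ge_atTop 1)] with T hT
  simp [occ, max_eq_left hT]

lemma invariant_of_tendsto_integral_occupation {U : Ultrafilter ℝ}
    (hU : ↑U ≤ (atTop : Filter ℝ)) {m : Measure X} [IsProbabilityMeasure m]
    (hm : ∀ f : X → ℝ, Continuous f →
      Tendsto (fun T => ∫ y, f y ∂(hQ.occupation x T)) U (𝓝 (∫ y, f y ∂m)))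
    (t : ℝ≥0) : (Q t).Invariant m := by
  refine ext_of_forall_integral_eq_of_IsFiniteMeasure fun f => ?_
  rw [integral_comp_measure (integrable_of_continuous _ f.continuous), ← sub_eq_zero]
  exact tendsto_nhds_unique
    ((hm _ (hQ.continuous_evolve t f.continuous)).sub (hm f f.continuous))
    ((hQ.tendsto_integral_occupation_evolve_sub x f.continuous t).mono_left hU)

include hQ in
/-- Every limit point of the occupation measures as `T → ∞` is invariant. -/
theorem tendsto_timeAverage [T2Space X] {c : ℝ} (hg : Continuous g)
    (hinv : ∀ m : Measure X, IsProbabilityMeasure m → (∀ t, (Q t).Invariant m) →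
      ∫ y, g y ∂m = c) :
    Tendsto (fun T : ℝ => 1 / T * ∫ s in (0 : ℝ)..T, evolve Q s.toNNReal g x) atTop (𝓝 c) := by
  have hocc : Tendsto (fun T => ∫ y, g y ∂(hQ.occupation x T)) atTop (𝓝 c) := by
    rw [tendsto_iff_ultrafilter]
    intro U hU
    obtain ⟨m, hmprob, hm⟩ := hQ.exists_limit_occupation x hU
    rw [← hinv m hmprob (hQ.invariant_of_tendsto_integral_occupation x hU hm)]
    exact hm g hg
  refine hocc.congr' ?_
  filter_upwards [eventually_gt_atTop 0] with T hT using hQ.integral_occupation x hg hT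

end IsFellerSemigroup

end UniqueErgodicity

section Cylinder

lemma continuous_of_dependsOn {ι β : Type*} {α : ι → Type*} [∀ i, TopologicalSpace (α i)]
    [∀ i, DiscreteTopology (α i)] [TopologicalSpace β] {f : (∀ i, α i) → β} {S : Finset ι}
    (hf : DependsOn f S) : Continuous f := by
  refine continuous_iff_continuousAt.2 fun ω => (continuousAt_const (y := f ω)).congr ?_
  have hnear : ∀ᶠ ω' in 𝓝 ω, ∀ i ∈ S, ω i = ω' i :=
    S.eventually_all.2 fun i _ => (continuous_apply i).continuousAt.eventually
      ((isOpen_discrete {ω i}).mem_nhds rfl) |>.mono fun _ h => Eq.symm h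
  filter_upwards [hnear] with ω' hω' using hf hω'

lemma flipAt_of_ne (ω : Config) {x y : ℤ} (h : y ≠ x) : flipAt ω x y = ω y := if_neg h

lemma eastGen_eq_sum (p : ℝ) {f : Config → ℝ} {S : Finset ℤ} (hf : DependsOnF f S) (ω : Config) :
    eastGen p f ω = ∑ x ∈ S, (if ω (x + 1) = false then (1 : ℝ) else 0) *
      (if ω x = false then p else 1 - p) * (f (flipAt ω x) - f ω) := by
  refine tsum_eq_sum fun x hx => ?_
  have : f (flipAt ω x) = f ω := hf _ _ fun y hy =>
    flipAt_of_ne ω (ne_of_mem_of_not_mem (Finset.mem_coe.1 hy) hx)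
  rw [this, sub_self, mul_zero]

namespace IsCylinder

variable {f : Config → ℝ}

protected lemma continuous (hf : IsCylinder f) : Continuous f := by
  obtain ⟨S, hS⟩ := hf
  exact continuous_of_dependsOn (S := S) fun ω ω' => hS ω ω'

protected lemma eastGen (hf : IsCylinder f) (p : ℝ) : IsCylinder (eastGen p f) := by
  obtain ⟨S, hS⟩ := hf
  refine ⟨S ∪ S.image (· + 1), fun ω ω' h => ?_⟩
  have hmem (x : ℤ) (hx : x ∈ S) : ω x = ω' x := h x (by simp [hx])
  rw [eastGen_eq_sum p hS, eastGen_eq_sum p hS]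
  refine Finset.sum_congr rfl fun x hx => ?_
  have hflip : f (flipAt ω x) = f (flipAt ω' x) := hS _ _ fun y hy => by
    simp only [flipAt, hmem x hx, hmem y hy]
  rw [hflip, hS ω ω' hmem, hmem x hx, h (x + 1) (by simp [hx])]

end IsCylinder

end Cylinder

section Front

variable {ω : Config} {m : ℤ}

lemma isLeast_front (hω : ω ∈ LO) : IsLeast {x | ω x = false} (front ω) := by
  obtain ⟨⟨y, hy⟩, hne⟩ := hω
  have hbdd : BddBelow {x | ω x = false} := ⟨y, fun x hx => not_lt.1 fun hlt => by
    simp [hy x hlt] at hx⟩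
  exact ⟨Int.csInf_mem hne hbdd, fun x hx => csInf_le hbdd hx⟩

lemma mem_LO_of_isLeast (h : IsLeast {x | ω x = false} m) : ω ∈ LO :=
  ⟨⟨m, fun _ hx => Bool.of_not_eq_false fun hfalse => (h.2 hfalse).not_gt hx⟩, m, h.1⟩

lemma front_eq_zero_of_notMem_LO (hω : ω ∉ LO) : front ω = 0 := by
  by_cases hbdd : BddBelow {x | ω x = false}
  · rcases Set.eq_empty_or_nonempty {x | ω x = false} with hempty | hne
    · rw [front, hempty, Int.csInf_empty]
    · exact absurd (mem_LO_of_isLeast ⟨Int.csInf_mem hne hbdd, fun x => csInf_le hbdd⟩) hω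
  · exact Int.csInf_of_not_bddBelow hbdd

lemma mem_LO₀_iff : ω ∈ LO₀ ↔ IsLeast {x | ω x = false} 0 :=
  ⟨fun h => h.2 ▸ isLeast_front h.1, fun h => ⟨mem_LO_of_isLeast h, h.csInf_eq⟩⟩

lemma isClosed_setOf_isLeast (m : ℤ) : IsClosed {ω : Config | IsLeast {x | ω x = false} m} := by
  have heq : {ω : Config | IsLeast {x | ω x = false} m} =
      {ω | ω m = false} ∩ ⋂ x < m, {ω | ω x = true} := by
    ext ω
    simp only [IsLeast, mem_lowerBounds, Set.mem_ofPred_eq, Set.mem_inter_iff, Set.mem_iInter]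
    refine and_congr_right fun _ => forall_congr' fun x => ?_
    grind
  rw [heq]
  exact (isClosed_eq (continuous_apply m) continuous_const).inter
    (isClosed_biInter fun x _ => isClosed_eq (continuous_apply x) continuous_const)

lemma isClosed_LO₀ : IsClosed LO₀ := by
  rw [show LO₀ = {ω | IsLeast {x | ω x = false} 0} from Set.ext fun _ => mem_LO₀_iff]
  exact isClosed_setOf_isLeast 0

lemma measurableSet_LO : MeasurableSet LO := by
  have heq : LO = ⋃ m, {ω : Config | IsLeast {x | ω x = false} m} := by
    ext ω
    simp only [Set.mem_iUnion]
    exact ⟨fun h => ⟨front ω, isLeast_front h⟩, fun ⟨_, h⟩ => mem_LO_of_isLeast h⟩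
  rw [heq]
  exact .iUnion fun m => (isClosed_setOf_isLeast m).measurableSet

lemma measurable_front : Measurable front := by
  refine measurable_to_countable' fun m => ?_
  have heq : front ⁻¹' {m} =
      {ω | IsLeast {x | ω x = false} m} ∪ (LOᶜ ∩ {_ω | m = 0}) := by
    ext ω
    by_cases hω : ω ∈ LO
    · simp only [Set.mem_preimage, Set.mem_singleton_iff, Set.mem_union, Set.mem_inter_iff,
        Set.mem_compl_iff, hω, not_true, false_and, or_false]
      exact ⟨fun h => h ▸ isLeast_front hω, fun h => h.csInf_eq⟩
    · have hleast : ¬ IsLeast {x | ω x = false} m := fun h => hω (mem_LO_of_isLeast h)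
      simp [hω, hleast, front_eq_zero_of_notMem_LO hω, eq_comm (a := m)]
  rw [heq]
  exact (isClosed_setOf_isLeast m).measurableSet.union (measurableSet_LO.compl.inter (.const _))

instance : CompactSpace LO₀ := isCompact_iff_compactSpace.1 isClosed_LO₀.isCompact

end Front

namespace EastProcess

variable (E : EastProcess)

/-- The transition kernels of the East process, indexed by nonnegative times. -/
abbrev kernel (t : ℝ≥0) : Kernel Config Config := E.P t

instance (t : ℝ) : IsMarkovKernel (E.P t) := E.markov t

lemma isFellerSemigroup_kernel : IsFellerSemigroup E.kernel where
  zero := E.P0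
  add s t := E.semigroup s t s.2 t.2
  continuous_evolve t {f} := E.feller t t.2 f
  continuous_evolve_time {f} hf ω := (E.timeCont f hf ω).comp NNReal.continuous_coe

lemma evolve_eq_add_integral_eastGen {f : Config → ℝ} (hf : IsCylinder f) (t : ℝ≥0) (ω : Config) :
    evolve E.kernel t f ω =
      f ω + ∫ s in (0 : ℝ)..t, evolve E.kernel s.toNNReal (eastGen E.p f) ω := by
  refine E.isFellerSemigroup_kernel.evolve_eq_add_integral hf.continuous
    (hf.eastGen E.p).continuous (fun ω' => ?_) t ω
  refine (E.generator f hf ω').congr_of_mem (fun u hu => ?_) Set.self_mem_Ici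
  simp only [evolve, kernel, Real.coe_toNNReal u hu]

lemma abs_evolve_sub_le {f : Config → ℝ} (hf : IsCylinder f) {C : ℝ}
    (hgen : ∀ ω, |eastGen E.p f ω| ≤ C) (t : ℝ≥0) (ω : Config) :
    |evolve E.kernel t f ω - f ω| ≤ C * t := by
  rw [E.evolve_eq_add_integral_eastGen hf, add_sub_cancel_left]
  simpa using intervalIntegral.norm_integral_le_of_norm_le_const (a := 0) (b := (t : ℝ))
    (f := fun s => evolve E.kernel s.toNNReal (eastGen E.p f) ω)
    fun s _ => abs_evolve_le hgen s.toNNReal ω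

lemma ae_mem_LO {t : ℝ≥0} {ω : Config} (hω : ω ∈ LO) : ∀ᵐ η ∂(E.kernel t ω), η ∈ LO :=
  (mem_ae_iff_prob_eq_one measurableSet_LO).2 (E.loStable t t.2 ω hω)

end EastProcess

section ViewFromFront

/-- The configuration `ω` seen from the site `y`, made left-occupied with front at the origin. -/
def viewFrom (y : ℤ) (ω : Config) : LO₀ :=
  ⟨fun x => if x < 0 then true else if x = 0 then false else ω (y + x),
    mem_LO₀_iff.2 ⟨by simp, fun x hx => not_lt.1 fun hneg => by
      rw [Set.mem_ofPred_eq, if_pos hneg] at hx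
      contradiction⟩⟩

lemma continuous_viewFrom : Continuous fun z : ℤ × Config => viewFrom z.1 z.2 := by
  refine .subtype_mk (continuous_pi fun x => continuous_prod_of_discrete_left.2 fun y => ?_) _
  dsimp only
  split_ifs
  · exact continuous_const
  · exact continuous_const
  · exact continuous_apply _

lemma coe_viewFrom_one (y : ℤ) (ω : Config) : (viewFrom y ω).1 1 = ω (y + 1) := rfl

/-- The configuration seen from its front: the map `θ`. -/
def recenter (ω : Config) : LO₀ := viewFrom (front ω) ω

lemma measurable_recenter : Measurable recenter :=
  continuous_viewFrom.measurable.comp (measurable_front.prodMk measurable_id)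

lemma coe_recenter (ω : Config) : (recenter ω : Config) = θL 0 ω := by
  funext x
  simp only [recenter, viewFrom, θL, add_zero]

lemma coe_recenter_eq_shift {ω : Config} (hω : ω ∈ LO) :
    (recenter ω : Config) = shift (front ω) ω := by
  have hleast := isLeast_front hω
  funext x
  rcases lt_trichotomy x 0 with hx | rfl | hx
  · have : ω (x + front ω) ≠ false := fun h => by linarith [hleast.2 h]
    simpa [recenter, viewFrom, shift, hx] using this.symm
  · simpa [recenter, viewFrom, shift] using hleast.1.symm
  · simp [recenter, viewFrom, shift, hx.not_gt, hx.ne', add_comm]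

lemma recenter_coe (ω : LO₀) : recenter ω = ω :=
  Subtype.ext <| by
    rw [coe_recenter_eq_shift ω.2.1, ω.2.2]
    funext x
    simp [shift]

lemma isLeast_shift {ω : Config} {m : ℤ} (h : IsLeast {x | ω x = false} m) (y : ℤ) :
    IsLeast {x | shift y ω x = false} (m - y) :=
  ⟨by simpa [shift] using h.1, fun x hx => by linarith [h.2 hx]⟩

lemma recenter_shift {ω : Config} (hω : ω ∈ LO) (y : ℤ) : recenter (shift y ω) = recenter ω := by
  have hleast := isLeast_shift (isLeast_front hω) y
  have hfront : front (shift y ω) = front ω - y := hleast.csInf_eq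
  refine Subtype.ext ?_
  rw [coe_recenter_eq_shift (mem_LO_of_isLeast hleast), coe_recenter_eq_shift hω, hfront]
  funext x
  simp only [shift, add_assoc, sub_add_cancel]

end ViewFromFront

section TruncatedFront

/-- The front seen through the window `[-N, N]`: the left-most zero in it, or `N + 1` if there is
none. It is a cylinder function approximating `front`. -/
def truncFront (N : ℕ) (ω : Config) : ℤ :=
  sInf {x : ℤ | -N ≤ x ∧ (N < x ∨ ω x = false)}

variable {N : ℕ} {ω ω' : Config} {m : ℤ}

lemma isLeast_truncFront (N : ℕ) (ω : Config) :
    IsLeast {x : ℤ | -N ≤ x ∧ (N < x ∨ ω x = false)} (truncFront N ω) :=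
  have hbdd : BddBelow {x : ℤ | -N ≤ x ∧ (N < x ∨ ω x = false)} := ⟨-N, fun _ hx => hx.1⟩
  ⟨Int.csInf_mem ⟨N + 1, by lia, .inl (by lia)⟩ hbdd, fun _ hx => csInf_le hbdd hx⟩

lemma truncFront_congr (h : ∀ x ∈ Finset.Icc (-N : ℤ) N, ω x = ω' x) :
    truncFront N ω = truncFront N ω' := by
  unfold truncFront
  congr 1
  ext x
  grind

lemma isCylinder_comp_truncFront (N : ℕ) (G : ℤ → ℝ) : IsCylinder fun ω => G (truncFront N ω) :=
  ⟨Finset.Icc (-N) N, fun _ _ h => congrArg G (truncFront_congr h)⟩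

lemma continuous_truncFront (N : ℕ) : Continuous (truncFront N) :=
  continuous_of_dependsOn (S := Finset.Icc (-N) N) fun _ _ => truncFront_congr

lemma continuous_coe_truncFront (N : ℕ) : Continuous fun ω => (truncFront N ω : ℝ) :=
  continuous_of_discreteTopology.comp (continuous_truncFront N)

lemma truncFront_eq_front (hω : ω ∈ LO) (hN : |front ω| ≤ N) : truncFront N ω = front ω := by
  obtain ⟨hfront, hle⟩ := isLeast_front hω
  rw [abs_le] at hN
  exact IsLeast.csInf_eq ⟨⟨hN.1, .inr hfront⟩, fun x hx => hx.2.elim (by grind) (hle ·)⟩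

lemma abs_truncFront_le (hω : ω ∈ LO) : |truncFront N ω| ≤ |front ω| := by
  by_cases hN : |front ω| ≤ N
  · rw [truncFront_eq_front hω hN]
  · have hmem := (isLeast_truncFront N ω).1
    have hle := (isLeast_truncFront N ω).2 ⟨by lia, .inl (lt_add_one (N : ℤ))⟩
    grind

lemma eventually_abs_front_lt (ω : Config) : ∀ᶠ N : ℕ in atTop, |front ω| < N := by
  filter_upwards [eventually_gt_atTop (|front ω|).toNat] with N hN using by lia

lemma eventually_truncFront_eq (hω : ω ∈ LO) :
    ∀ᶠ N in atTop, truncFront N ω = front ω := by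
  filter_upwards [eventually_abs_front_lt ω] with N hN using truncFront_eq_front hω hN.le

lemma continuous_comp_viewFrom_truncFront {f : LO₀ → ℝ} (hf : Continuous f) (N : ℕ) :
    Continuous fun η => f (viewFrom (truncFront N η) η) :=
  hf.comp (continuous_viewFrom.comp ((continuous_truncFront N).prodMk continuous_id))

lemma abs_comp_recenter_sub_le {f : LO₀ → ℝ} {C : ℝ} (hC : ∀ ζ, |f ζ| ≤ C) {N : ℕ} (hN : 0 < N)
    (hω : ω ∈ LO) :
    |f (recenter ω) - f (viewFrom (truncFront N ω) ω)| ≤ 2 * C / N * |(front ω : ℝ)| := by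
  have hC0 : 0 ≤ C := (abs_nonneg _).trans (hC (recenter ω))
  by_cases hfar : |front ω| ≤ N
  · rw [truncFront_eq_front hω hfar, ← recenter, sub_self, abs_zero]
    positivity
  · have hfar' : (N : ℝ) ≤ |(front ω : ℝ)| := by exact_mod_cast (not_le.1 hfar).le
    calc _ ≤ C + C := (abs_sub _ _).trans (add_le_add (hC _) (hC _))
      _ = 2 * C / N * N := by
          field_simp
          ring
      _ ≤ _ := by gcongr

lemma truncFront_eq_iff : truncFront N ω = m ↔ (-N : ℤ) ≤ m ∧ (N < m ∨ ω m = false) ∧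
    ∀ x : ℤ, -N ≤ x → x < m → x ≤ N ∧ ω x = true := by
  have hiff : IsLeast {x : ℤ | -N ≤ x ∧ (N < x ∨ ω x = false)} m ↔
      (-N : ℤ) ≤ m ∧ (N < m ∨ ω m = false) ∧
      ∀ x : ℤ, -N ≤ x → x < m → x ≤ N ∧ ω x = true := by
    simp only [IsLeast, mem_lowerBounds, Set.mem_ofPred_eq, and_assoc]
    refine and_congr_right fun _ => and_congr_right fun _ => forall_congr' fun x => ?_
    grind
  rw [← hiff]
  exact ⟨fun h => h ▸ isLeast_truncFront N ω, fun h => h.csInf_eq⟩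

lemma truncFront_flipAt_of_ne (h : truncFront N ω = m) {x : ℤ} (hx : x ≠ m) (hx' : x ≠ m - 1)
    (hrate : ω (x + 1) = false) : truncFront N (flipAt ω x) = m := by
  rw [truncFront_eq_iff] at h ⊢
  unfold flipAt
  grind

lemma truncFront_flipAt_self (h : truncFront N ω = m) (hrate : ω (m + 1) = false) :
    truncFront N (flipAt ω m) = if m ≤ N then m + 1 else m := by
  rw [truncFront_eq_iff] at h ⊢
  unfold flipAt
  grind

lemma truncFront_flipAt_sub_one (h : truncFront N ω = m) (hrate : ω m = false) :
    truncFront N (flipAt ω (m - 1)) = if -N < m then m - 1 else m := by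
  rw [truncFront_eq_iff] at h ⊢
  unfold flipAt
  grind

lemma eastGen_comp_truncFront (p : ℝ) (G : ℤ → ℝ) (h : truncFront N ω = m) :
    eastGen p (fun ω => G (truncFront N ω)) ω =
      (if m ≤ N ∧ ω (m + 1) = false then p * (G (m + 1) - G m) else 0) +
      if -N < m ∧ ω m = false then (1 - p) * (G (m - 1) - G m) else 0 := by
  obtain ⟨-, hm, hocc⟩ := truncFront_eq_iff.1 h
  have hsum : eastGen p (fun ω => G (truncFront N ω)) ω =
      ∑ x ∈ {m, m - 1}, _ :=
    tsum_eq_sum fun x hx => by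
      rw [Finset.mem_insert, Finset.mem_singleton, not_or] at hx
      by_cases hrate : ω (x + 1) = false
      · simp [truncFront_flipAt_of_ne h hx.1 hx.2 hrate, h]
      · simp [hrate]
  rw [hsum, Finset.sum_pair (by lia)]
  congr 1
  · by_cases hrate : ω (m + 1) = false
    · grind [truncFront_flipAt_self]
    · simp [hrate]
  · by_cases hrate : ω m = false
    · grind [truncFront_flipAt_sub_one]
    · simp [hrate]

lemma abs_eastGen_comp_truncFront_le {p : ℝ} (hp0 : 0 ≤ p) (hp1 : p ≤ 1) {G : ℤ → ℝ}
    (hG : ∀ m, |G (m + 1) - G m| ≤ 1) (ω : Config) :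
    |eastGen p (fun ω => G (truncFront N ω)) ω| ≤ 1 := by
  have hG' (m : ℤ) : |G (m - 1) - G m| ≤ 1 := by
    simpa [abs_sub_comm] using hG (m - 1)
  rw [eastGen_comp_truncFront p G rfl]
  have habs (P : Prop) [Decidable P] {a b : ℝ} (ha : 0 ≤ a) (hb : |b| ≤ 1) :
      |if P then a * b else 0| ≤ a := by
    split_ifs
    · rw [abs_mul, abs_of_nonneg ha]
      exact mul_le_of_le_one_right ha hb
    · rwa [abs_zero]
  calc _ ≤ p + (1 - p) :=
        (abs_add_le _ _).trans
          (add_le_add (habs _ hp0 (hG _)) (habs _ (sub_nonneg.2 hp1) (hG' _)))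
    _ = 1 := add_sub_cancel _ _

end TruncatedFront

/-- The instantaneous mean velocity of the front, as a function of the configuration seen from
it. -/
def drift (p : ℝ) (ω : LO₀) : ℝ := p * (if ω.1 1 = false then 1 else 0) - (1 - p)

lemma continuous_drift (p : ℝ) : Continuous (drift p) := by
  have hind : Continuous fun b : Bool => if b = false then (1 : ℝ) else 0 :=
    continuous_of_discreteTopology
  have hsite : Continuous fun ω : LO₀ => ω.1 1 := (continuous_apply 1).comp continuous_subtype_val
  exact (continuous_const.mul (hind.comp hsite)).sub continuous_const

lemma eastGen_truncFront_eq_drift (p : ℝ) {N : ℕ} {ω : Config} (hω : ω ∈ LO)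
    (hN : |front ω| < N) :
    eastGen p (fun ω => (truncFront N ω : ℝ)) ω = drift p (recenter ω) := by
  have hfront := (isLeast_front hω).1
  rw [Set.mem_ofPred_eq] at hfront
  rw [abs_lt] at hN
  rw [eastGen_comp_truncFront p (↑) (truncFront_eq_front hω (abs_le.2 ⟨hN.1.le, hN.2.le⟩)),
    drift, recenter, coe_viewFrom_one]
  by_cases hnext : ω (front ω + 1) = false
  · rw [if_pos ⟨hN.2.le, hnext⟩, if_pos ⟨hN.1, hfront⟩, if_pos hnext]
    push_cast
    ring
  · simp [hfront, hnext, hN.1, hN.2.le]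

lemma lintegral_enorm_le_of_tendsto_ae {α : Type*} [MeasurableSpace α] {m : Measure α}
    {F : ℕ → α → ℝ} {f : α → ℝ} {C : ENNReal} (hF : ∀ n, AEMeasurable (F n) m)
    (hlim : ∀ᵐ a ∂m, Tendsto (fun n => F n a) atTop (𝓝 (f a)))
    (hC : ∀ n, ∫⁻ a, ‖F n a‖ₑ ∂m ≤ C) : ∫⁻ a, ‖f a‖ₑ ∂m ≤ C :=
  calc ∫⁻ a, ‖f a‖ₑ ∂m = ∫⁻ a, liminf (fun n => ‖F n a‖ₑ) atTop ∂m :=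
        lintegral_congr_ae <| by filter_upwards [hlim] with a ha using ha.enorm.liminf_eq.symm
    _ ≤ liminf (fun n => ∫⁻ a, ‖F n a‖ₑ ∂m) atTop := lintegral_liminf_le' fun n => (hF n).enorm
    _ ≤ C := liminf_le_of_frequently_le' (.of_forall hC)

namespace EastProcess

variable (E : EastProcess) {ω : Config}

section FirstMoment

lemma evolve_abs_truncFront_le (N : ℕ) (t : ℝ≥0) (hω : ω ∈ LO) :
    evolve E.kernel t (fun η => |(truncFront N η : ℝ)|) ω ≤ |(front ω : ℝ)| + t := by
  have hgen (ω : Config) : |eastGen E.p (fun η => |(truncFront N η : ℝ)|) ω| ≤ 1 :=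
    abs_eastGen_comp_truncFront_le E.hp0.le E.hp1.le (G := fun m => |(m : ℝ)|)
      (fun m => (abs_abs_sub_abs_le_abs_sub _ _).trans (by simp)) ω
  have hinit : |(truncFront N ω : ℝ)| ≤ |(front ω : ℝ)| := by exact_mod_cast abs_truncFront_le hω
  have hdiff := (abs_le.1 (E.abs_evolve_sub_le
    (isCylinder_comp_truncFront N fun m => |(m : ℝ)|) hgen t ω)).2
  linarith

lemma lintegral_enorm_front_le (t : ℝ≥0) (hω : ω ∈ LO) :
    ∫⁻ η, ‖(front η : ℝ)‖ₑ ∂(E.kernel t ω) ≤ ENNReal.ofReal (|(front ω : ℝ)| + t) := by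
  refine lintegral_enorm_le_of_tendsto_ae
    (fun N => (continuous_coe_truncFront N).aemeasurable) ?_ fun N => ?_
  · filter_upwards [E.ae_mem_LO hω] with η hη
    refine tendsto_const_nhds.congr' ?_
    filter_upwards [eventually_truncFront_eq hη] with N hN using by rw [hN]
  · rw [← ofReal_integral_norm_eq_lintegral_enorm
      (integrable_of_continuous _ (continuous_coe_truncFront N))]
    exact ENNReal.ofReal_le_ofReal (E.evolve_abs_truncFront_le N t hω)

lemma integrable_front (t : ℝ≥0) (hω : ω ∈ LO) :
    Integrable (fun η => (front η : ℝ)) (E.kernel t ω) :=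
  ⟨(measurable_from_top.comp measurable_front).aestronglyMeasurable,
    (E.lintegral_enorm_front_le t hω).trans_lt ENNReal.ofReal_lt_top⟩

lemma evolve_abs_front_le (t : ℝ≥0) (hω : ω ∈ LO) :
    evolve E.kernel t (fun η => |(front η : ℝ)|) ω ≤ |(front ω : ℝ)| + t := by
  rw [← ENNReal.ofReal_le_ofReal_iff (by positivity)]
  exact (ofReal_integral_norm_eq_lintegral_enorm (E.integrable_front t hω)).trans_le
    (E.lintegral_enorm_front_le t hω)

end FirstMoment

section FrontKernel

/-- The transition kernels of the process seen from the front, as kernels on the compact space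
`LO₀`. -/
def frontKernel (t : ℝ≥0) : Kernel LO₀ LO₀ :=
  ((E.kernel t).map recenter).comap (↑) measurable_subtype_coe

instance (t : ℝ≥0) : IsMarkovKernel (E.frontKernel t) :=
  have := Kernel.IsMarkovKernel.map (E.kernel t) measurable_recenter
  inferInstanceAs (IsMarkovKernel (((E.kernel t).map recenter).comap _ _))

lemma frontKernel_apply (t : ℝ≥0) (ω : LO₀) :
    E.frontKernel t ω = (E.kernel t ω).map recenter := by
  rw [frontKernel, Kernel.comap_apply, Kernel.map_apply _ measurable_recenter]

lemma frontKernel_recenter (t : ℝ≥0) (hω : ω ∈ LO) :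
    E.frontKernel t (recenter ω) = (E.kernel t ω).map recenter := by
  have hshift : Measurable (shift (front ω)) :=
    measurable_pi_lambda _ fun x => measurable_pi_apply _
  rw [frontKernel_apply, coe_recenter_eq_shift hω, E.shiftComm t t.2,
    Measure.map_map measurable_recenter hshift]
  refine Measure.map_congr ?_
  filter_upwards [E.ae_mem_LO hω] with η hη using recenter_shift hη _

lemma evolve_frontKernel_recenter {f : LO₀ → ℝ} (hf : Continuous f) (t : ℝ≥0) (hω : ω ∈ LO) :
    evolve E.frontKernel t f (recenter ω) = evolve E.kernel t (f ∘ recenter) ω := by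
  rw [evolve, E.frontKernel_recenter t hω,
    integral_map measurable_recenter.aemeasurable hf.aestronglyMeasurable]
  rfl

lemma frontKernel_add (s t : ℝ≥0) :
    E.frontKernel (t + s) = E.frontKernel s ∘ₖ E.frontKernel t := by
  ext ω A hA
  have hpre := measurable_recenter hA
  rw [frontKernel_apply, Measure.map_apply measurable_recenter hA,
    E.isFellerSemigroup_kernel.add, Kernel.comp_apply' _ _ _ hpre, Kernel.comp_apply' _ _ _ hA,
    frontKernel_apply, lintegral_map (Kernel.measurable_coe _ hA) measurable_recenter]
  refine lintegral_congr_ae ?_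
  filter_upwards [E.ae_mem_LO ω.2.1] with η hη
  rw [E.frontKernel_recenter s hη, Measure.map_apply measurable_recenter hA]

lemma frontKernel_zero : E.frontKernel 0 = Kernel.id := by
  ext1 ω
  rw [frontKernel_apply, E.isFellerSemigroup_kernel.zero, Kernel.id_apply, Kernel.id_apply,
    Measure.map_dirac' measurable_recenter, recenter_coe]

lemma abs_evolve_comp_recenter_sub_le {f : LO₀ → ℝ} (hf : Continuous f) {C : ℝ}
    (hC : ∀ ζ, |f ζ| ≤ C) {N : ℕ} (hN : 0 < N) (t : ℝ≥0) (hω : ω ∈ LO) :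
    |evolve E.kernel t (f ∘ recenter) ω -
      evolve E.kernel t (fun η => f (viewFrom (truncFront N η) η)) ω| ≤
      2 * C / N * (|(front ω : ℝ)| + t) := by
  have hC0 : 0 ≤ C := (abs_nonneg _).trans (hC (recenter ω))
  have hint : Integrable (f ∘ recenter) (E.kernel t ω) :=
    .of_bound (hf.measurable.comp measurable_recenter).aestronglyMeasurable C
      (.of_forall fun η => hC _)
  rw [evolve, evolve, ← integral_sub hint
    (integrable_of_continuous _ (continuous_comp_viewFrom_truncFront hf N))]
  have hae : ∀ᵐ η ∂(E.kernel t ω), ‖(f ∘ recenter) η - f (viewFrom (truncFront N η) η)‖ ≤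
      2 * C / N * |(front η : ℝ)| := by
    filter_upwards [E.ae_mem_LO hω] with η hη using abs_comp_recenter_sub_le hC hN hη
  calc |∫ η, ((f ∘ recenter) η - f (viewFrom (truncFront N η) η)) ∂(E.kernel t ω)|
      ≤ ∫ η, 2 * C / N * |(front η : ℝ)| ∂(E.kernel t ω) :=
        norm_integral_le_of_norm_le ((E.integrable_front t hω).abs.const_mul _) hae
    _ = 2 * C / N * evolve E.kernel t (fun η => |(front η : ℝ)|) ω := integral_const_mul _ _
    _ ≤ 2 * C / N * (|(front ω : ℝ)| + t) :=
        mul_le_mul_of_nonneg_left (E.evolve_abs_front_le t hω) (by positivity)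

lemma tendstoLocallyUniformly_evolve_frontKernel {f : LO₀ → ℝ} (hf : Continuous f) :
    TendstoLocallyUniformly
      (fun (N : ℕ) (z : ℝ≥0 × LO₀) =>
        evolve E.kernel z.1 (fun η => f (viewFrom (truncFront N η) η)) z.2)
      (fun z => evolve E.frontKernel z.1 f z.2) atTop := by
  obtain ⟨C, hC⟩ := exists_abs_le_of_continuous hf
  refine Metric.tendstoLocallyUniformly_iff.2 fun ε hε z => ?_
  have hlim : Tendsto (fun N : ℕ => 2 * C / N * (z.1 + 1)) atTop (𝓝 0) := by
    simpa using (tendsto_const_div_atTop_nhds_zero_nat (2 * C)).mul_const ((z.1 : ℝ) + 1)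
  refine ⟨{z' | z'.1 < z.1 + 1}, (isOpen_lt continuous_fst continuous_const).mem_nhds
    (by simp), ?_⟩
  filter_upwards [hlim.eventually_lt_const hε, eventually_gt_atTop 0] with N hN hpos z' hz'
  have hC0 : 0 ≤ C := (abs_nonneg _).trans (hC z.2)
  have hz' : (z'.1 : ℝ) ≤ z.1 + 1 := by exact_mod_cast le_of_lt hz'
  have hbound := E.abs_evolve_comp_recenter_sub_le hf hC hpos z'.1 z'.2.2.1
  rw [z'.2.2.2, Int.cast_zero, abs_zero, zero_add] at hbound
  have hevolve := E.evolve_frontKernel_recenter hf z'.1 z'.2.2.1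
  rw [recenter_coe] at hevolve
  rw [hevolve, Real.dist_eq]
  exact (hbound.trans (by gcongr)).trans_lt hN

lemma isFellerSemigroup_frontKernel : IsFellerSemigroup E.frontKernel where
  zero := E.frontKernel_zero
  add := E.frontKernel_add
  continuous_evolve t {f} hf :=
    ((E.tendstoLocallyUniformly_evolve_frontKernel hf).comp (fun ω => (t, ω))
      (by fun_prop)).continuous <| .of_forall fun N =>
        (E.isFellerSemigroup_kernel.continuous_evolve t
          (continuous_comp_viewFrom_truncFront hf N)).comp continuous_subtype_val
  continuous_evolve_time {f} hf ω :=
    ((E.tendstoLocallyUniformly_evolve_frontKernel hf).comp (fun t => (t, ω))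
      (by fun_prop)).continuous <| .of_forall fun N =>
        E.isFellerSemigroup_kernel.continuous_evolve_time
          (continuous_comp_viewFrom_truncFront hf N) ω

lemma Qt_map_coe (t : ℝ≥0) (m : Measure LO₀) :
    Qt E t (m.map (↑)) = (E.frontKernel t ∘ₘ m).map (↑) := by
  have hθ : θL 0 = (↑) ∘ recenter := funext fun ω => (coe_recenter ω).symm
  have hcomap : E.frontKernel t ∘ₘ m = (E.kernel t ∘ₘ m.map (↑)).map recenter := by
    ext A hA
    rw [Measure.map_apply measurable_recenter hA, Measure.bind_apply hA (Kernel.aemeasurable _),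
      Measure.bind_apply (measurable_recenter hA) (Kernel.aemeasurable _),
      lintegral_map (Kernel.measurable_coe _ (measurable_recenter hA)) measurable_subtype_coe]
    simp only [frontKernel_apply, Measure.map_apply measurable_recenter hA]
  rw [hcomap, Measure.map_map measurable_subtype_coe measurable_recenter, ← hθ]
  rfl

end FrontKernel

end EastProcess

section MeanFront

namespace EastProcess

variable (E : EastProcess) {ω : Config}

lemma tendsto_evolve_of_eventually_eq {F : ℕ → Config → ℝ} {f b : Config → ℝ}
    (hF : ∀ N, Continuous (F N)) {t : ℝ≥0} (hω : ω ∈ LO) (hb : Integrable b (E.kernel t ω))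
    (hFb : ∀ N, ∀ η ∈ LO, |F N η| ≤ b η) (hFf : ∀ η ∈ LO, ∀ᶠ N in atTop, F N η = f η) :
    Tendsto (fun N => evolve E.kernel t (F N) ω) atTop (𝓝 (evolve E.kernel t f ω)) := by
  refine tendsto_integral_of_dominated_convergence b (fun N => (hF N).aestronglyMeasurable) hb
    (fun N => ?_) ?_
  · filter_upwards [E.ae_mem_LO hω] with η hη using hFb N η hη
  · filter_upwards [E.ae_mem_LO hω] with η hη using tendsto_nhds_of_eventually_eq (hFf η hη)

lemma tendsto_evolve_truncFront (t : ℝ≥0) (hω : ω ∈ LO) :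
    Tendsto (fun N => evolve E.kernel t (fun η => (truncFront N η : ℝ)) ω) atTop
      (𝓝 (evolve E.kernel t (fun η => (front η : ℝ)) ω)) :=
  E.tendsto_evolve_of_eventually_eq continuous_coe_truncFront hω
    (E.integrable_front t hω).abs (fun N η hη => by exact_mod_cast abs_truncFront_le hη)
    fun η hη => (eventually_truncFront_eq hη).mono fun N hN => congrArg _ hN

lemma abs_eastGen_truncFront_le (N : ℕ) (ω : Config) :
    |eastGen E.p (fun η => (truncFront N η : ℝ)) ω| ≤ 1 :=
  abs_eastGen_comp_truncFront_le E.hp0.le E.hp1.le (G := (↑)) (by simp) ω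

lemma continuous_eastGen_truncFront (N : ℕ) :
    Continuous (eastGen E.p fun η => (truncFront N η : ℝ)) :=
  ((isCylinder_comp_truncFront N (↑)).eastGen E.p).continuous

lemma tendsto_evolve_eastGen_truncFront (t : ℝ≥0) (hω : ω ∈ LO) :
    Tendsto (fun N => evolve E.kernel t (eastGen E.p fun η => (truncFront N η : ℝ)) ω) atTop
      (𝓝 (evolve E.frontKernel t (drift E.p) (recenter ω))) := by
  rw [E.evolve_frontKernel_recenter (continuous_drift _) t hω]
  refine E.tendsto_evolve_of_eventually_eq E.continuous_eastGen_truncFront hω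
    (integrable_const 1) (fun N η _ => E.abs_eastGen_truncFront_le N η) fun η hη => ?_
  filter_upwards [eventually_abs_front_lt η] with N hN using eastGen_truncFront_eq_drift _ hη hN

theorem integral_front_eq (t : ℝ≥0) (hω : ω ∈ LO) :
    ∫ η in LO, (front η : ℝ) ∂(E.P t ω) =
      front ω + ∫ s in (0 : ℝ)..t, evolve E.frontKernel s.toNNReal (drift E.p) (recenter ω) := by
  rw [Measure.restrict_eq_self_of_ae_mem (E.ae_mem_LO hω)]
  refine tendsto_nhds_unique (E.tendsto_evolve_truncFront t hω) ?_
  simp only [E.evolve_eq_add_integral_eastGen (isCylinder_comp_truncFront _ (↑))]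
  have hinit : Tendsto (fun N => (truncFront N ω : ℝ)) atTop (𝓝 (front ω)) :=
    tendsto_nhds_of_eventually_eq <|
      (eventually_truncFront_eq hω).mono fun N hN => congrArg _ hN
  refine hinit.add (intervalIntegral.tendsto_integral_filter_of_dominated_convergence (fun _ => 1)
    (.of_forall fun N => ?_) (.of_forall fun N => .of_forall fun s _ => ?_)
    intervalIntegrable_const (.of_forall fun s _ => E.tendsto_evolve_eastGen_truncFront _ hω))
  · exact (E.isFellerSemigroup_kernel.continuous_evolve_toNNReal
      (E.continuous_eastGen_truncFront N) ω).aestronglyMeasurable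
  · exact abs_evolve_le (E.abs_eastGen_truncFront_le N) _ ω

end EastProcess

lemma integral_drift (p : ℝ) (m : Measure LO₀) [IsProbabilityMeasure m] :
    ∫ ω, drift p ω ∂m = p * (m.map (↑) {η : Config | η 1 = false}).toReal - (1 - p) := by
  have hcoord : Measurable fun η : Config => η 1 := measurable_pi_apply 1
  have hempty : MeasurableSet {η : Config | η 1 = false} :=
    measurableSet_eq_fun hcoord measurable_const
  have hempty' : MeasurableSet {ω : LO₀ | ω.1 1 = false} := measurable_subtype_coe hempty
  have hind : (fun ω : LO₀ => if ω.1 1 = false then (1 : ℝ) else 0) =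
      {ω : LO₀ | ω.1 1 = false}.indicator 1 := by
    ext ω
    simp [Set.indicator_apply]
  have hint : Integrable (fun ω : LO₀ => if ω.1 1 = false then (1 : ℝ) else 0) m := by
    rw [hind]
    exact (integrable_const 1).indicator hempty'
  unfold drift
  rw [integral_sub (hint.const_mul p) (integrable_const _), integral_const_mul, hind,
    integral_indicator_one hempty', Measure.map_apply measurable_subtype_coe hempty]
  simp [Measure.real]

end MeanFront

theorem front_mean_speed_general (E : EastProcess) {c : ℝ}
    (hc : ∀ ν : Measure Config, IsProbabilityMeasure ν → ν LO₀ = 1 →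
      (∀ t : ℝ, 0 ≤ t → Qt E t ν = ν) → (ν {η : Config | η 1 = false}).toReal = c)
    {ω : Config} (hω : ω ∈ LO) :
    Tendsto (fun t : ℝ => (1 / t) * ∫ η in LO, (front η : ℝ) ∂(E.P t ω)) atTop
      (𝓝 (E.p * c - (1 - E.p))) := by
  have hdrift (m : Measure LO₀) (hm : IsProbabilityMeasure m)
      (hinv : ∀ t, (E.frontKernel t).Invariant m) :
      ∫ ζ, drift E.p ζ ∂m = E.p * c - (1 - E.p) := by
    have hLO₀ : (m.map (↑) : Measure Config) LO₀ = 1 := by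
      rw [Measure.map_apply measurable_subtype_coe isClosed_LO₀.measurableSet,
        Subtype.coe_preimage_self, measure_univ]
    rw [integral_drift, hc _ (Measure.isProbabilityMeasure_map (by fun_prop)) hLO₀ fun t ht => ?_]
    lift t to ℝ≥0 using ht
    rw [E.Qt_map_coe, hinv t]
  have hinit : Tendsto (fun t : ℝ => (front ω : ℝ) / t) atTop (𝓝 0) :=
    tendsto_const_nhds.div_atTop tendsto_id
  have htime := E.isFellerSemigroup_frontKernel.tendsto_timeAverage (recenter ω)
    (continuous_drift E.p) hdrift
  rw [← zero_add (E.p * c - (1 - E.p))]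
  refine (hinit.add htime).congr' ?_
  filter_upwards [eventually_ge_atTop 0] with t ht
  lift t to ℝ≥0 using ht
  rw [E.integral_front_eq t hω, mul_add, one_div_mul_eq_div (_ : ℝ) (front ω : ℝ)]

/-- **Convergence of the mean front position** (Step 1 in the proof of Theorem 6.1 of the
paper): if `ν` is the invariant measure of the process seen from the front and
`v = p ν(1 − ω₁) − q`, then for every `ω ∈ LO₀`, `E_ω[X(ω(t))]/t → v` as `t → ∞`. -/
theorem front_mean_speed (E : EastProcess) (hgap : 0 < gap E)
    (ν : Measure Config) (hν : IsProbabilityMeasure ν) (hν0 : ν LO₀ = 1)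
    (hinv : ∀ t : ℝ, 0 ≤ t → Qt E t ν = ν)
    (huniq : ∀ ν' : Measure Config, IsProbabilityMeasure ν' → ν' LO₀ = 1 →
      (∀ t : ℝ, 0 ≤ t → Qt E t ν' = ν') → ν' = ν) :
    ∀ ω ∈ LO₀,
      Tendsto (fun t : ℝ => (1 / t) * ∫ η in LO, (front η : ℝ) ∂(E.P t ω))
        atTop (𝓝 (E.p * (ν {η' : Config | η' 1 = false}).toReal - (1 - E.p))) :=
  fun _ hω => front_mean_speed_general E (fun ν' h₁ h₂ h₃ => by rw [huniq ν' h₁ h₂ h₃]) hω.1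

end
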